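/- Let G be a group, S and T G-sets, and ρ : ℤ[S] → ℤ[T] a G-equivariant additive homomorphism. Suppose that S has finitely many G-orbits, T has finitely many G-orbits, and the stabilizer in G of each element of T is finite. Then for every integer n ≥ 1 the set D_n has finitely many G-orbits; that is, there is a finite subset R ⊆ ℤ[S] such that every x ∈ D_n equals g • r for some g ∈ G and r ∈ R. -/

import Mathlib

open Finsupp

/-- Action of `g : G` on the permutation module `ℤ[S]`, permuting the basis. -/
def gact {G S : Type*} [Group G] [MulAction G S] (g : G) (x : S →₀ ℤ) : S →₀ ℤ :=
  Finsupp.equivMapDomain (MulAction.toPerm g) x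

/-- The ℓ1-norm on `ℤ[S]`. -/
def l1 {S : Type*} (x : S →₀ ℤ) : ℕ := x.support.sum fun s => (x s).natAbs

/-- `x` is a part of `y`, written `x ⪯_S y`. -/
def IsPart {S : Type*} (x y : S →₀ ℤ) : Prop := ∀ s, x s ^ 2 ≤ x s * y s

/-- `x` and `y` have trivial S-intersection. -/
def SIntTrivial {S : Type*} (x y : S →₀ ℤ) : Prop := ∀ s, 0 ≤ x s * y s

/-- membership in `D₁ = S ∪ (-S) ⊆ ℤ[S]`. -/
def InD1 {S : Type*} (x : S →₀ ℤ) : Prop :=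
  ∃ s, x = Finsupp.single s 1 ∨ x = Finsupp.single s (-1)

/-- `x` and `y` have nontrivial ρ-intersection. -/
def RhoInt {S T : Type*} (ρ : (S →₀ ℤ) →+ (T →₀ ℤ)) (x y : S →₀ ℤ) : Prop :=
  ∃ x₁ y₁, InD1 x₁ ∧ InD1 y₁ ∧ IsPart x₁ x ∧ IsPart y₁ y ∧ ∃ t, ρ x₁ t * ρ y₁ t < 0

/-- membership in `D_n`. -/
def InD {S T : Type*} (ρ : (S →₀ ℤ) →+ (T →₀ ℤ)) (n : ℕ) (x : S →₀ ℤ) : Prop :=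
  ∃ c : ℕ → (S →₀ ℤ), (∀ i < n, InD1 (c i)) ∧ x = ∑ i ∈ Finset.range n, c i ∧
    ∀ k, 1 ≤ k → k < n →
      SIntTrivial (∑ i ∈ Finset.range k, c i) (c k) ∧
      RhoInt ρ (∑ i ∈ Finset.range k, c i) (c k)

/-- `x` is ρ-connected. -/
def RhoConnected {S T : Type*} (ρ : (S →₀ ℤ) →+ (T →₀ ℤ)) (x : S →₀ ℤ) : Prop :=
  ∃ n, 1 ≤ n ∧ InD ρ n x

/-- `ρ` is G-equivariant. -/
def Equivariant (G : Type*) {S T : Type*} [Group G] [MulAction G S] [MulAction G T]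
    (ρ : (S →₀ ℤ) →+ (T →₀ ℤ)) : Prop :=
  ∀ (g : G) (x : S →₀ ℤ), ρ (gact g x) = gact g (ρ x)

/-- `S` has finitely many G-orbits. -/
def FinitelyManyOrbits (G S : Type*) [Group G] [MulAction G S] : Prop :=
  ∃ R : Finset S, ∀ s : S, ∃ (g : G) (r : S), r ∈ R ∧ g • r = s

/-- every element of `T` has finite stabilizer. -/
def FiniteStabilizers (G T : Type*) [Group G] [MulAction G T] : Prop :=
  ∀ t : T, {g : G | g • t = t}.Finite

theorem gact_apply {G S : Type*} [Group G] [MulAction G S] (g : G) (x : S →₀ ℤ) (s : S) :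
    gact g x s = x (g⁻¹ • s) := rfl

theorem gact_single {G S : Type*} [Group G] [MulAction G S] (g : G) (s : S) (a : ℤ) :
    gact g (Finsupp.single s a) = Finsupp.single (g • s) a := by
  simp [gact, Finsupp.equivMapDomain_single]

theorem gact_add {G S : Type*} [Group G] [MulAction G S] (g : G) (x y : S →₀ ℤ) :
    gact g (x + y) = gact g x + gact g y := by
  ext s; simp [gact_apply]

/-- Only finitely many basis elements have `t` in the support of their image. -/
theorem finite_fiber {G S T : Type*} [Group G] [MulAction G S] [MulAction G T]
    (ρ : (S →₀ ℤ) →+ (T →₀ ℤ)) (hρ : Equivariant G ρ)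
    (hS : FinitelyManyOrbits G S) (hstab : FiniteStabilizers G T) (t : T) :
    {s : S | ρ (Finsupp.single s 1) t ≠ 0}.Finite := by
  classical
  obtain ⟨R, hR⟩ := hS
  have htr : ∀ u : T, {g : G | g⁻¹ • t = u}.Finite := by
    intro u
    by_cases h : ∃ g₀ : G, g₀⁻¹ • t = u
    · obtain ⟨g₀, rfl⟩ := h
      refine ((hstab t).image (fun k => k * g₀)).subset ?_
      intro g hg
      refine ⟨g * g₀⁻¹, ?_, by simp⟩
      simp only [Set.mem_setOf_eq] at hg ⊢
      rw [mul_smul, ← hg, smul_inv_smul]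
    · convert Set.finite_empty
      ext g
      simp only [Set.mem_setOf_eq, Set.mem_empty_iff_false, iff_false]
      exact fun hg => h ⟨g, hg⟩
  have hfin : (⋃ r ∈ R, ⋃ u ∈ (ρ (Finsupp.single r 1)).support,
      (fun g : G => g • r) '' {g : G | g⁻¹ • t = u}).Finite := by
    refine Set.Finite.biUnion R.finite_toSet fun r _ => ?_
    refine Set.Finite.biUnion (Finset.finite_toSet _) fun u _ => ?_
    exact (htr u).image _
  refine hfin.subset ?_
  intro s hs
  obtain ⟨g, r, hr, rfl⟩ := hR s
  simp only [Set.mem_setOf_eq] at hs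
  rw [← gact_single, hρ, gact_apply] at hs
  simp only [Set.mem_iUnion]
  exact ⟨r, hr, g⁻¹ • t, Finsupp.mem_support_iff.2 hs, g, rfl, rfl⟩

/-- A loosened adjacency relation between `x` and the basis element `s'`. -/
def Near {S T : Type*} (ρ : (S →₀ ℤ) →+ (T →₀ ℤ)) (x : S →₀ ℤ) (s' : S) : Prop :=
  ∃ s ∈ x.support, ∃ t ∈ (ρ (Finsupp.single s 1)).support, ρ (Finsupp.single s' 1) t ≠ 0

theorem near_finite {G S T : Type*} [Group G] [MulAction G S] [MulAction G T]
    (ρ : (S →₀ ℤ) →+ (T →₀ ℤ)) (hρ : Equivariant G ρ)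
    (hS : FinitelyManyOrbits G S) (hstab : FiniteStabilizers G T) (x : S →₀ ℤ) :
    {s' : S | Near ρ x s'}.Finite := by
  have hfin : (⋃ s ∈ x.support, ⋃ t ∈ (ρ (Finsupp.single s 1)).support,
      {s' : S | ρ (Finsupp.single s' 1) t ≠ 0}).Finite := by
    refine Set.Finite.biUnion (Finset.finite_toSet _) fun r _ => ?_
    refine Set.Finite.biUnion (Finset.finite_toSet _) fun u _ => ?_
    exact finite_fiber ρ hρ hS hstab u
  refine hfin.subset ?_
  rintro s' ⟨s, hs, t, ht, h⟩
  simp only [Set.mem_iUnion]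
  exact ⟨s, hs, t, ht, h⟩

theorem near_gact {G S T : Type*} [Group G] [MulAction G S] [MulAction G T]
    (ρ : (S →₀ ℤ) →+ (T →₀ ℤ)) (hρ : Equivariant G ρ) (g : G) (x : S →₀ ℤ) (s' : S)
    (h : Near ρ (gact g x) s') : Near ρ x (g⁻¹ • s') := by
  obtain ⟨s, hs, t, ht, h⟩ := h
  rw [Finsupp.mem_support_iff] at hs ht
  refine ⟨g⁻¹ • s, Finsupp.mem_support_iff.2 hs, g⁻¹ • t, ?_, ?_⟩
  · rw [Finsupp.mem_support_iff, ← gact_single, hρ, gact_apply]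
    simpa using ht
  · rw [← gact_single, hρ, gact_apply]
    simpa using h

theorem single_neg_one {S T : Type*} (ρ : (S →₀ ℤ) →+ (T →₀ ℤ)) (s : S) (t : T) :
    ρ (Finsupp.single s (-1)) t = - ρ (Finsupp.single s 1) t := by
  rw [Finsupp.single_neg, map_neg, Finsupp.neg_apply]

theorem exists_of_InD1 {S T : Type*} (ρ : (S →₀ ℤ) →+ (T →₀ ℤ)) (x : S →₀ ℤ) (h : InD1 x) :
    ∃ s, x s ≠ 0 ∧ ∀ t, ρ x t ≠ 0 → ρ (Finsupp.single s 1) t ≠ 0 := by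
  obtain ⟨s, rfl | rfl⟩ := h
  · exact ⟨s, by simp, fun t h => h⟩
  · refine ⟨s, by simp, fun t h => ?_⟩
    rw [single_neg_one] at h
    exact fun h0 => h (by simp [h0])

theorem IsPart.ne_zero {S : Type*} {x y : S →₀ ℤ} (h : IsPart x y) {s : S} (hs : x s ≠ 0) :
    y s ≠ 0 := by
  intro h0
  have := h s
  rw [h0, mul_zero] at this
  exact hs (pow_eq_zero_iff (two_ne_zero) |>.1 (le_antisymm this (sq_nonneg _)))

theorem near_of_rhoInt {S T : Type*} (ρ : (S →₀ ℤ) →+ (T →₀ ℤ)) (x : S →₀ ℤ) (s' : S) (a : ℤ)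
    (h : RhoInt ρ x (Finsupp.single s' a)) : Near ρ x s' := by
  obtain ⟨x₁, y₁, hx₁, hy₁, hx, hy, t, ht⟩ := h
  obtain ⟨s, hs, h1⟩ := exists_of_InD1 ρ x₁ hx₁
  obtain ⟨s₂, hs₂, h2⟩ := exists_of_InD1 ρ y₁ hy₁
  have e : s₂ = s' := by
    by_contra hne
    exact hy.ne_zero hs₂ (Finsupp.single_eq_of_ne hne)
  subst e
  exact ⟨s, Finsupp.mem_support_iff.2 (hx.ne_zero hs), t,
    Finsupp.mem_support_iff.2 (h1 t (left_ne_zero_of_mul ht.ne)),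
    h2 t (right_ne_zero_of_mul ht.ne)⟩

/-- Proposition: `D_n` has finitely many G-orbits. -/
theorem stmt_6 {G S T : Type*} [Group G] [MulAction G S] [MulAction G T]
    (ρ : (S →₀ ℤ) →+ (T →₀ ℤ)) (hρ : Equivariant G ρ)
    (hS : FinitelyManyOrbits G S) (hT : FinitelyManyOrbits G T)
    (hstab : FiniteStabilizers G T) :
    ∀ n : ℕ, 1 ≤ n → ∃ R : Finset (S →₀ ℤ),
      ∀ x : S →₀ ℤ, InD ρ n x → ∃ (g : G) (r : S →₀ ℤ), r ∈ R ∧ x = gact g r := by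
  classical
  intro n hn
  induction n, hn using Nat.le_induction with
  | base =>
    obtain ⟨R, hR⟩ := hS
    refine ⟨R.image (fun r => Finsupp.single r 1) ∪ R.image (fun r => Finsupp.single r (-1)), ?_⟩
    rintro x ⟨c, hc, rfl, -⟩
    obtain ⟨s, hs⟩ := hc 0 (by norm_num)
    obtain ⟨g, r, hr, rfl⟩ := hR s
    rw [Finset.sum_range_one]
    rcases hs with hs | hs
    · exact ⟨g, Finsupp.single r 1,
        Finset.mem_union_left _ (Finset.mem_image_of_mem _ hr), by rw [gact_single, hs]⟩
    · exact ⟨g, Finsupp.single r (-1),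
        Finset.mem_union_right _ (Finset.mem_image_of_mem _ hr), by rw [gact_single, hs]⟩
  | succ n hn ih =>
    obtain ⟨R, hR⟩ := ih
    have hfin : (⋃ r ∈ R, ⋃ a ∈ ({1, -1} : Finset ℤ),
        (fun s' => r + Finsupp.single s' a) '' {s' : S | Near ρ r s'}).Finite := by
      refine Set.Finite.biUnion R.finite_toSet fun r _ => ?_
      refine Set.Finite.biUnion (Finset.finite_toSet _) fun a _ => ?_
      exact (near_finite ρ hρ hS hstab r).image _
    refine ⟨hfin.toFinset, ?_⟩
    rintro x ⟨c, hc, rfl, hk⟩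
    obtain ⟨g, r, hr, hgr⟩ := hR (∑ i ∈ Finset.range n, c i)
      ⟨c, fun i hi => hc i (by omega), rfl, fun k h1 h2 => hk k h1 (by omega)⟩
    have hrho := (hk n hn (by omega)).2
    have hc' : ∃ s, ∃ a ∈ ({1, -1} : Finset ℤ), c n = Finsupp.single s a := by
      obtain ⟨s, h | h⟩ := hc n (by omega)
      · exact ⟨s, 1, by simp, h⟩
      · exact ⟨s, -1, by simp, h⟩
    obtain ⟨s, a, ha, hs⟩ := hc'
    rw [hgr, hs] at hrho
    have hnear := near_gact ρ hρ g r s (near_of_rhoInt ρ _ _ _ hrho)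
    refine ⟨g, r + Finsupp.single (g⁻¹ • s) a, ?_, ?_⟩
    · rw [Set.Finite.mem_toFinset]
      simp only [Set.mem_iUnion]
      exact ⟨r, hr, a, ha, _, hnear, rfl⟩
    · rw [Finset.sum_range_succ, hgr, hs, gact_add, gact_single, smul_inv_smul]
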